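/- The number of 6-element subsets S of the projective plane ℙ²(𝔽₄) such that no three points of S are collinear is exactly 168. -/

import Mathlib

open scoped LinearAlgebra.Projectivization

/-- No three distinct points of `S ⊆ ℙ²(𝔽₄)` are collinear (i.e. have linearly dependent
representative vectors). -/
def NoThreeCollinear (S : Set (ℙ (GaloisField 2 2) (Fin 3 → GaloisField 2 2))) : Prop :=
  ∀ p ∈ S, ∀ q ∈ S, ∀ r ∈ S, p ≠ q → p ≠ r → q ≠ r → ¬ Projectivization.Dependent ![p, q, r]

/-!
Count pairs consisting of a 6-arc and an ordered quadrangle (four points, no three collinear)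
inside it.

The ordered quadrangles of a projective plane over a field `K` correspond to the linear coordinate
systems up to scalars, so for `|K| = 4` there are `(63 * 60 * 48) / 3 = 60480` of them. Each lies in
exactly one 6-arc. Indeed, in coordinates for which the quadrangle is `(1 : 0 : 0)`, `(0 : 1 : 0)`,
`(0 : 0 : 1)`, `(1 : 1 : 1)`, any further point of an arc containing it has nonzero and pairwise
distinct coordinates. Over a field with four elements such a point is `(1 : t : t²)`, so the arc is
contained in the conic `x₁² = x₀ x₂` completed by its nucleus `(0 : 1 : 0)`. These are six points,
and they form an arc because squaring is injective. Conversely a 6-arc contains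
`6 * 5 * 4 * 3 = 360` ordered quadrangles, and `60480 / 360 = 168`.
-/

open Function Projectivization
open Module (finrank)

section Independence

variable {ι κ K U V W : Type*} [DivisionRing K] [AddCommGroup U] [Module K U] [AddCommGroup V]
  [Module K V] [AddCommGroup W] [Module K W]

theorem independent_mk_iff {v : ι → V} (hv : ∀ i, v i ≠ 0) :
    Independent (fun i ↦ mk K (v i) (hv i)) ↔ LinearIndependent K v := by
  refine ⟨fun h ↦ ?_, Independent.mk v hv⟩
  by_contra hdep
  exact dependent_iff_not_independent.1 (Dependent.mk v hv hdep) h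

theorem independent_comp_of_injective {p : ι → ℙ K V} (hp : Independent p) {σ : κ → ι}
    (hσ : Injective σ) : Independent (p ∘ σ) :=
  independent_iff.2 ((independent_iff.1 hp).comp σ hσ)

/-- The isomorphism of projective spaces induced by a linear isomorphism. -/
def projectiveEquiv (f : V ≃ₗ[K] W) : ℙ K V ≃ ℙ K W where
  toFun := Projectivization.map f.toLinearMap f.injective
  invFun := Projectivization.map f.symm.toLinearMap f.symm.injective
  left_inv p := by induction p with | h v hv => simp [map_mk]
  right_inv p := by induction p with | h v hv => simp [map_mk]

theorem projectiveEquiv_mk (f : V ≃ₗ[K] W) {v : V} (hv : v ≠ 0) :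
    projectiveEquiv f (mk K v hv) = mk K (f v) (f.map_ne_zero_iff.2 hv) :=
  rfl

theorem projectiveEquiv_trans (f : U ≃ₗ[K] V) (g : V ≃ₗ[K] W) :
    projectiveEquiv (f.trans g) = (projectiveEquiv f).trans (projectiveEquiv g) := by
  ext p
  induction p with | h v hv => rfl

theorem independent_projectiveEquiv_comp_iff (f : V ≃ₗ[K] W) {p : ι → ℙ K V} :
    Independent (projectiveEquiv f ∘ p) ↔ Independent p := by
  have hp : p = fun i ↦ mk K (p i).rep (p i).rep_nonzero := by simp
  rw [hp]
  simp only [comp_def, projectiveEquiv_mk, independent_mk_iff]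
  exact f.toLinearMap.linearIndependent_iff f.ker

end Independence

theorem independent_mk_triple_iff_det_ne_zero {K : Type*} [Field K] {u v w : Fin 3 → K}
    (hu : u ≠ 0) (hv : v ≠ 0) (hw : w ≠ 0) :
    Independent ![mk K u hu, mk K v hv, mk K w hw] ↔ (Matrix.of ![u, v, w]).det ≠ 0 := by
  have hne : ∀ i, ![u, v, w] i ≠ 0 := by simp [Fin.forall_fin_succ, hu, hv, hw]
  have hmk : ![mk K u hu, mk K v hv, mk K w hw] = fun i ↦ mk K (![u, v, w] i) (hne i) := by
    ext i; fin_cases i <;> rfl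
  rw [hmk, independent_mk_iff, ← isUnit_iff_ne_zero, ← Matrix.isUnit_iff_isUnit_det]
  exact Matrix.linearIndependent_rows_iff_isUnit

section Arc

variable {K V W : Type*} [DivisionRing K] [AddCommGroup V] [Module K V] [AddCommGroup W]
  [Module K W]

/-- An arc: a set of points of a projective space no three of which are collinear. -/
def IsArc (S : Set (ℙ K V)) : Prop :=
  ∀ p ∈ S, ∀ q ∈ S, ∀ r ∈ S, p ≠ q → p ≠ r → q ≠ r → Independent ![p, q, r]

theorem IsArc.mono {S T : Set (ℙ K V)} (hT : IsArc T) (hST : S ⊆ T) : IsArc S :=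
  fun p hp q hq r hr ↦ hT p (hST hp) q (hST hq) r (hST hr)

theorem IsArc.insert {S : Set (ℙ K V)} (hS : IsArc S) {p : ℙ K V}
    (hp : ∀ q ∈ S, ∀ r ∈ S, q ≠ r → Independent ![p, q, r]) : IsArc (insert p S) := by
  rintro a (rfl | ha) b (rfl | hb) c (rfl | hc) hab hac hbc
  any_goals contradiction
  · exact hp b hb c hc hbc
  · have hσ : Injective ![(1 : Fin 3), 0, 2] := by decide
    convert independent_comp_of_injective (hp a ha c hc hac) hσ using 1
    ext i; fin_cases i <;> rfl
  · have hσ : Injective ![(1 : Fin 3), 2, 0] := by decide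
    convert independent_comp_of_injective (hp a ha b hb hab) hσ using 1
    ext i; fin_cases i <;> rfl
  · exact hS a ha b hb c hc hab hac hbc

theorem IsArc.image_projectiveEquiv {S : Set (ℙ K V)} (hS : IsArc S) (f : V ≃ₗ[K] W) :
    IsArc (projectiveEquiv f '' S) := by
  rintro _ ⟨p, hp, rfl⟩ _ ⟨q, hq, rfl⟩ _ ⟨r, hr, rfl⟩ hpq hpr hqr
  have hpts : ![projectiveEquiv f p, projectiveEquiv f q, projectiveEquiv f r] =
      projectiveEquiv f ∘ ![p, q, r] := by
    ext i; fin_cases i <;> rfl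
  rw [hpts, independent_projectiveEquiv_comp_iff]
  exact hS p hp q hq r hr (ne_of_apply_ne _ hpq) (ne_of_apply_ne _ hpr) (ne_of_apply_ne _ hqr)

theorem IsArc.preimage_projectiveEquiv {S : Set (ℙ K W)} (hS : IsArc S) (f : V ≃ₗ[K] W) :
    IsArc (projectiveEquiv f ⁻¹' S) := by
  rw [← Equiv.image_symm_eq_preimage]
  exact hS.image_projectiveEquiv f.symm

variable (K V) in
/-- Ordered quadrangles of `ℙ K V`: four distinct points, no three of them collinear. In a plane
these are the projective frames. -/
abbrev Quadrangle : Type _ := {p : Fin 4 ↪ ℙ K V // IsArc (Set.range p)}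

variable (K V) in
/-- The `n`-arcs of `ℙ K V`: arcs with exactly `n` points. -/
abbrev ArcOfCard (n : ℕ) : Type _ :=
  {S : Finset (ℙ K V) // S.card = n ∧ IsArc (S : Set (ℙ K V))}

theorem card_arcOfCard_mul_descFactorial [Finite (ℙ K V)] {n : ℕ}
    (h : ∀ p : Quadrangle K V, ∃! S : Finset (ℙ K V),
      (S.card = n ∧ IsArc (S : Set (ℙ K V))) ∧ Set.range p.1 ⊆ S) :
    Nat.card (ArcOfCard K V n) * n.descFactorial 4 = Nat.card (Quadrangle K V) := by
  have := Fintype.ofFinite (ℙ K V)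
  let toQuadrangle (Sq : Σ S : ArcOfCard K V n, Fin 4 ↪ S.1) : Quadrangle K V :=
    ⟨Sq.2.trans (.subtype _), Sq.1.2.2.mono (by rintro _ ⟨i, rfl⟩; exact (Sq.2 i).2)⟩
  have hrange (Sq) : Set.range (toQuadrangle Sq).1 ⊆ Sq.1.1 := by
    rintro _ ⟨i, rfl⟩
    exact (Sq.2 i).2
  have hbij : Bijective toQuadrangle := by
    refine ⟨?_, fun p ↦ ?_⟩
    · rintro ⟨S, q⟩ ⟨T, r⟩ hqr
      obtain rfl : S = T := Subtype.ext <| (h (toQuadrangle ⟨S, q⟩)).unique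
        ⟨S.2, hrange ⟨S, q⟩⟩ ⟨T.2, hqr ▸ hrange ⟨T, r⟩⟩
      have : q = r := by
        ext i
        exact congr(($hqr).1 i)
      rw [this]
    · obtain ⟨S, ⟨hS, hpS⟩, -⟩ := h p
      exact ⟨⟨⟨S, hS⟩, p.1.codRestrict _ fun i ↦ hpS ⟨i, rfl⟩⟩, rfl⟩
  have hcard (S : ArcOfCard K V n) :
      Nat.card (Fin 4 ↪ S.1) = n.descFactorial 4 := by
    rw [Nat.card_eq_fintype_card, Fintype.card_embedding_eq, Fintype.card_coe, S.2.1,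
      Fintype.card_fin]
  have := Fintype.ofFinite (ArcOfCard K V n)
  rw [← Nat.card_eq_of_bijective _ hbij, Nat.card_sigma]
  simp only [hcard, Finset.sum_const, Finset.card_univ, smul_eq_mul, Nat.card_eq_fintype_card]

end Arc

section Conic

variable {K : Type*} [Field K]

/-- The point `(1 : t : t²)` of the conic `x₁² = x₀ x₂`. -/
def conicPoint (t : K) : ℙ K (Fin 3 → K) :=
  mk K ![1, t, t ^ 2] (by simp)

variable (K) in
/-- The point at infinity `(0 : 0 : 1)` of the conic `x₁² = x₀ x₂`. -/
def conicInfinity : ℙ K (Fin 3 → K) :=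
  mk K ![0, 0, 1] (by simp)

variable (K) in
/-- The point `(0 : 1 : 0)`, through which all tangents of the conic `x₁² = x₀ x₂` pass in
characteristic two. -/
def conicNucleus : ℙ K (Fin 3 → K) :=
  mk K ![0, 1, 0] (by simp)

/-- The points of the conic `x₁² = x₀ x₂` with parameter in `T ∪ {∞}`, together with the nucleus.
For `T = {0, 1}` these are the four standard reference points of the plane, for `T = K` with `K`
finite of characteristic two they form the regular hyperoval. -/
def augmentedConic (T : Set K) : Set (ℙ K (Fin 3 → K)) :=
  insert (conicNucleus K) (insert (conicInfinity K) (conicPoint '' T))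

theorem augmentedConic_mono {T U : Set K} (hTU : T ⊆ U) : augmentedConic T ⊆ augmentedConic U :=
  Set.insert_subset_insert (Set.insert_subset_insert (Set.image_mono hTU))

theorem conicPoint_injective : Injective (conicPoint : K → ℙ K (Fin 3 → K)) := by
  intro s t hst
  obtain ⟨a, ha⟩ := (mk_eq_mk_iff' K _ _ _ _).1 hst
  have h₀ : a = 1 := by simpa using congrFun ha 0
  have h₁ : a * t = s := by simpa using congrFun ha 1
  rw [← h₁, h₀, one_mul]

theorem conicInfinity_ne_conicPoint (t : K) : conicInfinity K ≠ conicPoint t := by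
  intro h
  obtain ⟨a, ha⟩ := (mk_eq_mk_iff' K _ _ _ _).1 h
  have h₀ : a = 0 := by simpa using congrFun ha 0
  simpa [h₀] using congrFun ha 2

theorem conicNucleus_ne_conicPoint (t : K) : conicNucleus K ≠ conicPoint t := by
  intro h
  obtain ⟨a, ha⟩ := (mk_eq_mk_iff' K _ _ _ _).1 h
  have h₀ : a = 0 := by simpa using congrFun ha 0
  simpa [h₀] using congrFun ha 1

theorem conicNucleus_ne_conicInfinity : conicNucleus K ≠ conicInfinity K := by
  intro h
  obtain ⟨a, ha⟩ := (mk_eq_mk_iff' K _ _ _ _).1 h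
  simpa using congrFun ha 1

theorem isArc_range_conicPoint : IsArc (Set.range (conicPoint : K → ℙ K (Fin 3 → K))) := by
  rintro _ ⟨s, rfl⟩ _ ⟨t, rfl⟩ _ ⟨u, rfl⟩ hst hsu htu
  have hvandermonde : (Matrix.of ![![1, s, s ^ 2], ![1, t, t ^ 2], ![1, u, u ^ 2]]).det =
      (t - s) * (u - s) * (u - t) := by
    simp only [Matrix.det_fin_three, Matrix.of_apply, Matrix.cons_val]; ring
  refine (independent_mk_triple_iff_det_ne_zero _ _ _).2 ?_
  rw [hvandermonde]
  have hts := sub_ne_zero.2 (ne_of_apply_ne _ hst).symm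
  have hus := sub_ne_zero.2 (ne_of_apply_ne _ hsu).symm
  have hut := sub_ne_zero.2 (ne_of_apply_ne _ htu).symm
  exact mul_ne_zero (mul_ne_zero hts hus) hut

theorem isArc_insert_conicInfinity :
    IsArc (insert (conicInfinity K) (Set.range conicPoint)) := by
  refine isArc_range_conicPoint.insert ?_
  rintro _ ⟨s, rfl⟩ _ ⟨t, rfl⟩ hst
  refine (independent_mk_triple_iff_det_ne_zero _ _ _).2 ?_
  simpa [Matrix.det_fin_three, sub_eq_zero] using (ne_of_apply_ne _ hst).symm

theorem isArc_augmentedConic {T : Set K} (hT : Set.InjOn (· ^ 2) T) :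
    IsArc (augmentedConic T) := by
  have hconic : IsArc (insert (conicInfinity K) (conicPoint '' T)) :=
    isArc_insert_conicInfinity.mono (Set.insert_subset_insert (Set.image_subset_range _ _))
  refine hconic.insert ?_
  rintro _ (rfl | ⟨s, hs, rfl⟩) _ (rfl | ⟨t, ht, rfl⟩) hne <;>
    refine (independent_mk_triple_iff_det_ne_zero _ _ _).2 ?_
  · contradiction
  · simp [Matrix.det_fin_three]
  · simp [Matrix.det_fin_three]
  · have hdet : (Matrix.of ![![0, 1, 0], ![1, s, s ^ 2], ![1, t, t ^ 2]]).det = s ^ 2 - t ^ 2 := by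
      simp only [Matrix.det_fin_three, Matrix.of_apply, Matrix.cons_val]; ring
    rw [hdet]
    exact sub_ne_zero.2 (hT.ne hs ht (ne_of_apply_ne _ hne))

theorem encard_augmentedConic (T : Set K) : (augmentedConic T).encard = T.encard + 2 := by
  rw [augmentedConic, Set.encard_insert_of_notMem, Set.encard_insert_of_notMem,
    conicPoint_injective.encard_image, add_assoc, one_add_one_eq_two]
  · rintro ⟨t, -, ht⟩
    exact conicInfinity_ne_conicPoint t ht.symm
  · rintro (h | ⟨t, -, ht⟩)
    · exact conicNucleus_ne_conicInfinity h
    · exact conicNucleus_ne_conicPoint t ht.symm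

end Conic

section CoordinateTriangle

variable {K : Type*} [Field K] {S : Set (ℙ K (Fin 3 → K))} {x : Fin 3 → K} {hx : x ≠ 0}

theorem IsArc.coord_ne_zero (hS : IsArc S) (htriangle : augmentedConic {0} ⊆ S)
    (hxS : mk K x hx ∈ S) (hxtriangle : mk K x hx ∉ augmentedConic {0}) (i : Fin 3) :
    x i ≠ 0 := by
  simp only [augmentedConic, Set.image_singleton, Set.insert_subset_iff, Set.singleton_subset_iff,
    Set.mem_insert_iff, Set.mem_singleton_iff, not_or] at htriangle hxtriangle
  obtain ⟨hN, hI, hO⟩ := htriangle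
  obtain ⟨hxN, hxI, hxO⟩ := hxtriangle
  have hcoord₀ := hS _ hN _ hI _ hxS conicNucleus_ne_conicInfinity (Ne.symm hxN) (Ne.symm hxI)
  have hcoord₂ := hS _ hN _ hO _ hxS (conicNucleus_ne_conicPoint 0) (Ne.symm hxN) (Ne.symm hxO)
  have hcoord₁ := hS _ hI _ hO _ hxS (conicInfinity_ne_conicPoint 0) (Ne.symm hxI) (Ne.symm hxO)
  simp only [conicNucleus, conicInfinity, conicPoint, independent_mk_triple_iff_det_ne_zero,
    Matrix.det_fin_three] at hcoord₀ hcoord₂ hcoord₁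
  fin_cases i
  · simpa using hcoord₀
  · simpa using hcoord₁
  · simpa using hcoord₂

theorem IsArc.coord_injective (hS : IsArc S) (hquad : augmentedConic {0, 1} ⊆ S)
    (hxS : mk K x hx ∈ S) (hxquad : mk K x hx ∉ augmentedConic {0, 1}) : Injective x := by
  simp only [augmentedConic, Set.image_pair, Set.insert_subset_iff, Set.singleton_subset_iff,
    Set.mem_insert_iff, Set.mem_singleton_iff, not_or] at hquad hxquad
  obtain ⟨hN, hI, hO, hE⟩ := hquad
  obtain ⟨hxN, hxI, hxO, hxE⟩ := hxquad
  have hne : conicPoint (0 : K) ≠ conicPoint 1 := conicPoint_injective.ne zero_ne_one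
  have hNE := hS _ hN _ hE _ hxS (conicNucleus_ne_conicPoint 1) (Ne.symm hxN) (Ne.symm hxE)
  have hIE := hS _ hI _ hE _ hxS (conicInfinity_ne_conicPoint 1) (Ne.symm hxI) (Ne.symm hxE)
  have hOE := hS _ hO _ hE _ hxS hne (Ne.symm hxO) (Ne.symm hxE)
  simp only [conicNucleus, conicInfinity, conicPoint, independent_mk_triple_iff_det_ne_zero,
    Matrix.det_fin_three] at hNE hIE hOE
  have h₂₀ : x 2 ≠ x 0 := by simpa [add_eq_zero_iff_eq_neg] using hNE
  have h₁₀ : x 1 ≠ x 0 := by simpa [sub_eq_zero] using hIE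
  have h₂₁ : x 2 ≠ x 1 := by simpa [sub_eq_zero] using hOE
  simp [Injective, Fin.forall_fin_succ, h₁₀, h₂₀, h₂₁, h₁₀.symm, h₂₀.symm, h₂₁.symm]

end CoordinateTriangle

section Quadrangle

variable {K V : Type*} [Field K] [AddCommGroup V] [Module K V]

variable (K) in
/-- The reference quadrangle `(1 : 0 : 0)`, `(0 : 1 : 0)`, `(0 : 0 : 1)`, `(1 : 1 : 1)`, to which any
quadrangle of a plane is projectively equivalent. -/
def standardPoints : Fin 4 → ℙ K (Fin 3 → K) :=
  ![conicPoint 0, conicNucleus K, conicInfinity K, conicPoint 1]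

theorem standardPoints_injective : Injective (standardPoints K) := by
  have hne : conicPoint (0 : K) ≠ conicPoint 1 := conicPoint_injective.ne zero_ne_one
  simp [standardPoints, Injective, Fin.forall_fin_succ, hne, hne.symm, conicNucleus_ne_conicPoint,
    conicInfinity_ne_conicPoint, conicNucleus_ne_conicInfinity,
    (conicNucleus_ne_conicPoint _).symm, (conicInfinity_ne_conicPoint _).symm,
    conicNucleus_ne_conicInfinity.symm]

theorem range_standardPoints : Set.range (standardPoints K) = augmentedConic {0, 1} := by
  ext p
  simp only [standardPoints, augmentedConic, Set.image_pair, Matrix.range_cons, Matrix.range_empty,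
    Set.mem_union, Set.mem_insert_iff, Set.mem_singleton_iff, Set.mem_empty_iff_false]
  tauto

/-- The image of the standard points under a linear coordinate system of the plane. Proportional
coordinate systems give the same quadrangle. -/
def quadrangleOfEquiv (f : (Fin 3 → K) ≃ₗ[K] V) : Quadrangle K V where
  val := ⟨projectiveEquiv f ∘ standardPoints K,
    (projectiveEquiv f).injective.comp standardPoints_injective⟩
  property := by
    rw [Embedding.coeFn_mk, Set.range_comp, range_standardPoints]
    exact (isArc_augmentedConic (by simp [Set.InjOn])).image_projectiveEquiv f

theorem range_quadrangleOfEquiv (f : (Fin 3 → K) ≃ₗ[K] V) :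
    Set.range (quadrangleOfEquiv f).1 = projectiveEquiv f '' augmentedConic {0, 1} := by
  rw [← range_standardPoints, ← Set.range_comp]
  rfl

theorem quadrangleOfEquiv_trans_smulOfUnit (f : (Fin 3 → K) ≃ₗ[K] V) (c : Kˣ) :
    quadrangleOfEquiv (f.trans (.smulOfUnit c)) = quadrangleOfEquiv f := by
  have hmap (p : ℙ K (Fin 3 → K)) :
      projectiveEquiv (f.trans (.smulOfUnit c)) p = projectiveEquiv f p := by
    induction p with | h v hv => exact (mk_eq_mk_iff K _ _ _ _).2 ⟨c, rfl⟩
  ext i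
  exact hmap _

theorem exists_eq_trans_smulOfUnit_of_quadrangleOfEquiv_eq {f g : (Fin 3 → K) ≃ₗ[K] V}
    (h : quadrangleOfEquiv f = quadrangleOfEquiv g) : ∃ c : Kˣ, f = g.trans (.smulOfUnit c) := by
  have hpt (i : Fin 4) : (quadrangleOfEquiv f).1 i = (quadrangleOfEquiv g).1 i := by rw [h]
  obtain ⟨a₀, h₀⟩ := (mk_eq_mk_iff' K _ _ _ _).1 (hpt 0)
  obtain ⟨a₁, h₁⟩ := (mk_eq_mk_iff' K _ _ _ _).1 (hpt 1)
  obtain ⟨a₂, h₂⟩ := (mk_eq_mk_iff' K _ _ _ _).1 (hpt 2)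
  obtain ⟨c, hc⟩ := (mk_eq_mk_iff K _ _ _ _).1 (hpt 3)
  have hdiag (x : Fin 3 → K) : f x = g ![a₀ * x 0, a₁ * x 1, a₂ * x 2] := by
    have hx : x = x 0 • ![1, 0, 0 ^ 2] + x 1 • ![0, 1, 0] + x 2 • ![0, 0, 1] := by
      ext i; fin_cases i <;> simp
    calc f x = x 0 • f ![1, 0, 0 ^ 2] + x 1 • f ![0, 1, 0] + x 2 • f ![0, 0, 1] := by
          conv_lhs => rw [hx]
          simp only [map_add, map_smul]
      _ = x 0 • a₀ • g ![1, 0, 0 ^ 2] + x 1 • a₁ • g ![0, 1, 0] + x 2 • a₂ • g ![0, 0, 1] :=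
          congr(x 0 • $h₀.symm + x 1 • $h₁.symm + x 2 • $h₂.symm)
      _ = g ![a₀ * x 0, a₁ * x 1, a₂ * x 2] := by
          simp only [← map_smul, ← map_add]
          congr 1
          ext i; fin_cases i <;> simp [mul_comm]
  have hunit : (c : K) • ![(1 : K), 1, 1 ^ 2] = ![a₀ * 1, a₁ * 1, a₂ * 1 ^ 2] :=
    g.injective ((map_smul g (c : K) _).trans (hc.trans (hdiag _)))
  obtain rfl : (c : K) = a₀ := by simpa using congrFun hunit 0
  obtain rfl : (c : K) = a₁ := by simpa using congrFun hunit 1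
  obtain rfl : (c : K) = a₂ := by simpa using congrFun hunit 2
  refine ⟨c, LinearEquiv.ext fun x ↦ ?_⟩
  calc f x = g (c • x) := by
        rw [hdiag]; congr 1; ext i; fin_cases i <;> rfl
    _ = c • g x := map_smul g (c : K) x

theorem exists_projectiveEquiv_triangle_eq (hV : finrank K V = 3) {p q r : ℙ K V}
    (hpqr : Independent ![p, q, r]) : ∃ f : (Fin 3 → K) ≃ₗ[K] V,
      projectiveEquiv f (conicPoint 0) = p ∧ projectiveEquiv f (conicNucleus K) = q ∧
        projectiveEquiv f (conicInfinity K) = r := by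
  let b := basisOfLinearIndependentOfCardEqFinrank (independent_iff.1 hpqr) (by simp [hV])
  have hb : ⇑b = Projectivization.rep ∘ ![p, q, r] :=
    coe_basisOfLinearIndependentOfCardEqFinrank _ _
  refine ⟨b.equivFun.symm, ?_, ?_, ?_⟩
  · rw [conicPoint, projectiveEquiv_mk, ← mk_rep p, mk_eq_mk_iff']
    exact ⟨1, by simp [Fin.sum_univ_three, hb]⟩
  · rw [conicNucleus, projectiveEquiv_mk, ← mk_rep q, mk_eq_mk_iff']
    exact ⟨1, by simp [Fin.sum_univ_three, hb]⟩
  · rw [conicInfinity, projectiveEquiv_mk, ← mk_rep r, mk_eq_mk_iff']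
    exact ⟨1, by simp [Fin.sum_univ_three, hb]⟩

theorem exists_projectiveEquiv_fix_triangle {x : Fin 3 → K} (hx : x ≠ 0) (hxi : ∀ i, x i ≠ 0) :
    ∃ d : (Fin 3 → K) ≃ₗ[K] (Fin 3 → K),
      projectiveEquiv d (conicPoint 0) = conicPoint 0 ∧
      projectiveEquiv d (conicNucleus K) = conicNucleus K ∧
      projectiveEquiv d (conicInfinity K) = conicInfinity K ∧
      projectiveEquiv d (conicPoint 1) = mk K x hx := by
  refine ⟨LinearEquiv.piCongrRight fun i ↦ .smulOfNeZero K K (x i) (hxi i),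
    (mk_eq_mk_iff' K _ _ _ _).2 ⟨x 0, ?_⟩, (mk_eq_mk_iff' K _ _ _ _).2 ⟨x 1, ?_⟩,
    (mk_eq_mk_iff' K _ _ _ _).2 ⟨x 2, ?_⟩, (mk_eq_mk_iff' K _ _ _ _).2 ⟨1, ?_⟩⟩ <;>
  · ext i; fin_cases i <;> simp

theorem quadrangleOfEquiv_surjective (hV : finrank K V = 3) :
    Surjective (quadrangleOfEquiv : ((Fin 3 → K) ≃ₗ[K] V) → Quadrangle K V) := by
  rintro ⟨p, hp⟩
  have hpi {i j : Fin 4} (hij : i ≠ j) : p i ≠ p j := p.injective.ne hij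
  obtain ⟨f, hf₀, hf₁, hf₂⟩ := exists_projectiveEquiv_triangle_eq hV <|
    hp _ ⟨0, rfl⟩ _ ⟨1, rfl⟩ _ ⟨2, rfl⟩ (hpi (by decide)) (hpi (by decide)) (hpi (by decide))
  obtain ⟨q, hq⟩ := (projectiveEquiv f).surjective (p 3)
  induction q with | h x hx => ?_
  have hxi : ∀ i, x i ≠ 0 := by
    refine (hp.preimage_projectiveEquiv f).coord_ne_zero (hx := hx) ?_ ⟨3, hq.symm⟩ ?_
    · simp [augmentedConic, Set.insert_subset_iff, hf₀, hf₁, hf₂]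
    · simp [augmentedConic, ← (projectiveEquiv f).injective.eq_iff, hf₀, hf₁, hf₂, hq]
  obtain ⟨d, hd₀, hd₁, hd₂, hd₃⟩ := exists_projectiveEquiv_fix_triangle hx hxi
  refine ⟨d.trans f, Subtype.ext <| Embedding.ext fun i ↦ ?_⟩
  change projectiveEquiv (d.trans f) (standardPoints K i) = p i
  rw [projectiveEquiv_trans, Equiv.trans_apply]
  fin_cases i
  · exact (congrArg _ hd₀).trans hf₀
  · exact (congrArg _ hd₁).trans hf₁
  · exact (congrArg _ hd₂).trans hf₂
  · exact (congrArg _ hd₃).trans hq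

theorem card_quadrangle_mul_card_units (hV : finrank K V = 3) :
    Nat.card (Quadrangle K V) * Nat.card Kˣ = Nat.card ((Fin 3 → K) ≃ₗ[K] V) := by
  have hcoords := rightInverse_surjInv (quadrangleOfEquiv_surjective (K := K) (V := V) hV)
  set coords := surjInv (quadrangleOfEquiv_surjective (K := K) (V := V) hV)
  let rescale (pc : Quadrangle K V × Kˣ) : (Fin 3 → K) ≃ₗ[K] V :=
    (coords pc.1).trans (.smulOfUnit pc.2)
  have hquad (pc) : quadrangleOfEquiv (rescale pc) = pc.1 :=
    (quadrangleOfEquiv_trans_smulOfUnit _ _).trans (hcoords pc.1)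
  rw [← Nat.card_prod]
  refine Nat.card_eq_of_bijective rescale ⟨?_, fun f ↦ ?_⟩
  · rintro ⟨p, c⟩ ⟨q, d⟩ h
    obtain rfl : p = q := (hquad (p, c)).symm.trans ((congrArg _ h).trans (hquad (q, d)))
    have hsmul : c • coords p ![1, 0, 0] = d • coords p ![1, 0, 0] := congr($h ![1, 0, 0])
    have hne : coords p ![1, 0, 0] ≠ 0 := (coords p).map_ne_zero_iff.2 (by simp)
    rw [Units.ext (smul_left_injective K hne hsmul)]
  · obtain ⟨c, hc⟩ := exists_eq_trans_smulOfUnit_of_quadrangleOfEquiv_eq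
      (hcoords (quadrangleOfEquiv f)).symm
    exact ⟨(quadrangleOfEquiv f, c), hc.symm⟩

theorem card_linearEquiv_fin_fun [Finite K] [Module.Finite K V] {n : ℕ} (hV : finrank K V = n) :
    Nat.card ((Fin n → K) ≃ₗ[K] V) = ∏ i : Fin n, (Nat.card K ^ n - Nat.card K ^ (i : ℕ)) := by
  have := Fintype.ofFinite K
  let e : V ≃ₗ[K] (Fin n → K) := .ofFinrankEq _ _ (by simp [hV])
  let toGL : ((Fin n → K) ≃ₗ[K] V) ≃ ((Fin n → K) ≃ₗ[K] (Fin n → K)) :=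
    { toFun := (·.trans e)
      invFun := (·.trans e.symm)
      left_inv f := by ext; simp
      right_inv f := by ext; simp }
  rw [Nat.card_congr toGL,
    ← Nat.card_congr (LinearMap.GeneralLinearGroup.generalLinearEquiv K _).toEquiv,
    ← Nat.card_congr Matrix.GeneralLinearGroup.toLin.toEquiv, Matrix.card_GL_field,
    Nat.card_eq_fintype_card]

end Quadrangle

section FourElements

variable {K V : Type*} [Field K] [AddCommGroup V] [Module K V]

theorem pow_four_eq_self (hK : Nat.card K = 4) (x : K) : x ^ 4 = x := by
  have : Finite K := Nat.finite_of_card_ne_zero (by simp [hK])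
  have := Fintype.ofFinite K
  rw [← hK, Nat.card_eq_fintype_card, FiniteField.pow_card]

theorem sq_injective_of_card_eq_four (hK : Nat.card K = 4) : Injective (fun x : K ↦ x ^ 2) := by
  intro x y (hxy : x ^ 2 = y ^ 2)
  calc x = (x ^ 2) ^ 2 := by rw [← pow_mul, pow_four_eq_self hK]
    _ = (y ^ 2) ^ 2 := by rw [hxy]
    _ = y := by rw [← pow_mul, pow_four_eq_self hK]

theorem sq_add_self_add_one_eq_zero (hK : Nat.card K = 4) {x : K} (hx₀ : x ≠ 0) (hx₁ : x ≠ 1) :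
    x ^ 2 + x + 1 = 0 := by
  have hprod : x * (x - 1) * (x ^ 2 + x + 1) = 0 := by
    linear_combination pow_four_eq_self hK x
  exact (mul_eq_zero.1 hprod).resolve_left (mul_ne_zero hx₀ (sub_ne_zero.2 hx₁))

theorem eq_sq_of_card_eq_four (hK : Nat.card K = 4) {b c : K} (hb₀ : b ≠ 0) (hb₁ : b ≠ 1)
    (hc₀ : c ≠ 0) (hc₁ : c ≠ 1) (hcb : c ≠ b) : c = b ^ 2 := by
  have hb := sq_add_self_add_one_eq_zero hK hb₀ hb₁
  have hc := sq_add_self_add_one_eq_zero hK hc₀ hc₁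
  have hsum : c + b + 1 = 0 := by
    have hprod : (c - b) * (c + b + 1) = 0 := by linear_combination hc - hb
    exact (mul_eq_zero.1 hprod).resolve_left (sub_ne_zero.2 hcb)
  linear_combination hsum - hb

theorem IsArc.subset_augmentedConic_univ (hK : Nat.card K = 4) {S : Set (ℙ K (Fin 3 → K))}
    (hS : IsArc S) (hquad : augmentedConic {0, 1} ⊆ S) : S ⊆ augmentedConic Set.univ := by
  intro q hq
  by_cases hq' : q ∈ augmentedConic {0, 1}
  · exact augmentedConic_mono (Set.subset_univ _) hq'
  induction q with | h x hx => ?_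
  have hinj := hS.coord_injective hquad hq hq'
  have htriangle : augmentedConic {0} ⊆ augmentedConic {(0 : K), 1} :=
    augmentedConic_mono (by simp)
  have hne := hS.coord_ne_zero (htriangle.trans hquad) hq (mt (@htriangle _) hq')
  have hsq : x 2 / x 0 = (x 1 / x 0) ^ 2 := by
    apply eq_sq_of_card_eq_four hK <;>
      simp [div_eq_one_iff_eq, div_left_inj', hne, hinj.eq_iff]
  have hconic : mk K x hx = conicPoint (x 1 / x 0) := by
    refine (mk_eq_mk_iff' K _ _ _ _).2 ⟨x 0, ?_⟩
    rw [← hsq]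
    ext i
    fin_cases i <;> simp [mul_div_cancel₀, hne]
  rw [hconic]
  exact .inr (.inr ⟨_, trivial, rfl⟩)

theorem existsUnique_arc_card_eq_six (hK : Nat.card K = 4) (hV : finrank K V = 3)
    (p : Quadrangle K V) :
    ∃! S : Finset (ℙ K V), (S.card = 6 ∧ IsArc (S : Set (ℙ K V))) ∧ Set.range p.1 ⊆ S := by
  obtain ⟨f, rfl⟩ := quadrangleOfEquiv_surjective hV p
  have : Finite K := Nat.finite_of_card_ne_zero (by simp [hK])
  let H : Set (ℙ K V) := projectiveEquiv f '' augmentedConic Set.univ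
  have hHcard : H.encard = 6 := by
    rw [(projectiveEquiv f).injective.encard_image, encard_augmentedConic, Set.encard_univ,
      ENat.card_eq_coe_natCard, hK]
    rfl
  have hHfin : H.Finite := Set.finite_of_encard_eq_coe (k := 6) hHcard
  have hHarc : IsArc H :=
    (isArc_augmentedConic (sq_injective_of_card_eq_four hK).injOn).image_projectiveEquiv f
  refine ⟨hHfin.toFinset, ⟨⟨?_, by simpa⟩, ?_⟩, fun S ⟨⟨hScard, hSarc⟩, hSquad⟩ ↦ ?_⟩
  · rwa [← ENat.natCast_inj, ← Set.encard_coe_eq_coe_finsetCard, hHfin.coe_toFinset]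
  · rw [hHfin.coe_toFinset, range_quadrangleOfEquiv]
    exact Set.image_mono (augmentedConic_mono (Set.subset_univ _))
  · rw [range_quadrangleOfEquiv] at hSquad
    have hSH : (S : Set (ℙ K V)) ⊆ H := by
      rw [← (projectiveEquiv f).image_preimage S]
      exact Set.image_mono <| (hSarc.preimage_projectiveEquiv f).subset_augmentedConic_univ hK <|
        Set.image_subset_iff.1 hSquad
    refine Finset.coe_injective ?_
    rw [hHfin.coe_toFinset]
    refine S.finite_toSet.eq_of_subset_of_encard_le hSH ?_
    rw [hHcard, Set.encard_coe_eq_coe_finsetCard, hScard]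
    rfl

end FourElements

theorem noThreeCollinear_iff_isArc {S : Set (ℙ (GaloisField 2 2) (Fin 3 → GaloisField 2 2))} :
    NoThreeCollinear S ↔ IsArc S := by
  simp only [NoThreeCollinear, IsArc, independent_iff_not_dependent]

theorem stmt_6_general {K V : Type*} [Field K] [AddCommGroup V] [Module K V]
    (hK : Nat.card K = 4) (hV : finrank K V = 3) :
    Nat.card (ArcOfCard K V 6) = 168 := by
  have : Finite K := Nat.finite_of_card_ne_zero (by simp [hK])
  have : Module.Finite K V := Module.finite_of_finrank_eq_succ hV
  have : Finite V := Module.finite_of_finite K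
  have hcount := card_quadrangle_mul_card_units hV
  rw [card_linearEquiv_fin_fun hV, Nat.card_units, hK,
    ← card_arcOfCard_mul_descFactorial (existsUnique_arc_card_eq_six hK hV)] at hcount
  norm_num [Fin.prod_univ_three, Nat.descFactorial] at hcount
  omega

/-- There are exactly 168 six-element subsets of `ℙ²(𝔽₄)` with no three points collinear. -/
theorem stmt_6 :
    Nat.card {S : Finset (ℙ (GaloisField 2 2) (Fin 3 → GaloisField 2 2)) //
      S.card = 6 ∧ NoThreeCollinear ↑S} = 168 := by
  simp only [noThreeCollinear_iff_isArc]
  exact stmt_6_general (GaloisField.card 2 2 two_ne_zero) (by simp)
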